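/- (Pointwise form of Theorem 2.) Let C ∈ Mat(2,ℂ) be anti-hermitian with tr C = 0, let D^ν ∈ Mat(2,ℂ) for ν ∈ {0,1,2,3}, and let κ_μ{}^ν be real numbers such that the lowered array κ_{μν} := Σ_λ κ_μ{}^λ g_{λν} is antisymmetric, κ_{μν} = −κ_{νμ}. If D^ν − [C, L^ν] = Σ_μ κ_μ{}^ν · L^μ for every ν ∈ {0,1,2,3}, then C is uniquely determined by the formula C = −(1/4)·( Σ_ν D^ν · L_ν − Σ_{μ,ν} κ_{μν} · L^μ · L^ν ). -/

import Mathlib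

open Matrix BigOperators

noncomputable section

/-- The Pauli basis of `Mat(2,ℂ)`: `σ^0 = I`, `σ^1, σ^2, σ^3` the Pauli matrices. -/
def σm : Fin 4 → Matrix (Fin 2) (Fin 2) ℂ :=
  ![1, !![0, 1; 1, 0], !![0, -Complex.I; Complex.I, 0], !![1, 0; 0, -1]]

/-- The Minkowski matrix `η = diag(1,-1,-1,-1)`. -/
def ηm : Fin 4 → Fin 4 → ℝ := fun a b => if a = b then (if a = 0 then 1 else -1) else 0

/-- Lowered-index Pauli matrices `σ_a := Σ_b η_{ab} σ^b`. -/
def σd (a : Fin 4) : Matrix (Fin 2) (Fin 2) ℂ := ∑ b, ηm a b • σm b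

/-- The conjugate matrix `M̃ := (tr M)·I − M`. -/
def mtilde (M : Matrix (Fin 2) (Fin 2) ℂ) : Matrix (Fin 2) (Fin 2) ℂ :=
  M.trace • (1 : Matrix (Fin 2) (Fin 2) ℂ) - M

/-- The contravariant metric `g^{μν} := Σ_{a,b} y^μ_a y^ν_b η^{ab}` built from a tetrad `y`. -/
def gUp (y : Matrix (Fin 4) (Fin 4) ℝ) : Matrix (Fin 4) (Fin 4) ℝ :=
  Matrix.of fun μ ν => ∑ a, ∑ b, y μ a * y ν b * ηm a b

/-- The covariant metric `g_{μν}`, the inverse matrix of `(g^{μν})`. -/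
def gDown (y : Matrix (Fin 4) (Fin 4) ℝ) : Matrix (Fin 4) (Fin 4) ℝ := (gUp y)⁻¹

/-- `K^μ := Σ_a y^μ_a σ^a ∈ Mat(2,ℂ)`. -/
def K (y : Matrix (Fin 4) (Fin 4) ℝ) (μ : Fin 4) : Matrix (Fin 2) (Fin 2) ℂ :=
  ∑ a, y μ a • σm a

/-- `K_μ := Σ_ν g_{μν} K^ν`. -/
def Kd (y : Matrix (Fin 4) (Fin 4) ℝ) (μ : Fin 4) : Matrix (Fin 2) (Fin 2) ℂ :=
  ∑ ν, gDown y μ ν • K y ν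

/-- `L^μ := K^μ − τ^μ·I`, the traceless part of `K^μ`, where `τ^μ := y^μ_0`. -/
def Lm (y : Matrix (Fin 4) (Fin 4) ℝ) (μ : Fin 4) : Matrix (Fin 2) (Fin 2) ℂ :=
  K y μ - (y μ 0 : ℂ) • (1 : Matrix (Fin 2) (Fin 2) ℂ)

/-- `L_μ := Σ_ν g_{μν} L^ν`. -/
def Ld (y : Matrix (Fin 4) (Fin 4) ℝ) (μ : Fin 4) : Matrix (Fin 2) (Fin 2) ℂ :=
  ∑ ν, gDown y μ ν • Lm y ν

/-!
Contracting `[C, L^ν] L_ν` over `ν` reduces everything to sums `Σ_ν L^ν X L_ν`. The matrices `L^ν`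
involve only the Pauli matrices `σ^1, σ^2, σ^3`, and `y^T g y = η` turns the metric contraction into
`-Σ_i σ^i X σ^i = X - 2 (tr X) I`. Taking `X = I` and `X = C` gives
`Σ_ν [C, L^ν] L_ν = -3 C - (C - 2 (tr C) I)`, which is `-4` times the traceless part of `C`.
-/

section Contraction

variable {R M ι α β : Type*} [CommSemiring R] [Fintype ι] [Fintype β]

lemma sum_smul_sum_smul [AddCommMonoid M] [Module R M]
    (P : Matrix α ι R) (Q : Matrix ι β R) (T : β → M) (a : α) :
    ∑ i, P a i • ∑ b, Q i b • T b = ∑ b, (P * Q) a b • T b := by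
  simp only [Finset.smul_sum, smul_smul, mul_apply, Finset.sum_smul]
  exact Finset.sum_comm

lemma sum_sum_smul_mul_sum_smul [Fintype α] [NonUnitalNonAssocSemiring M] [Module R M]
    [IsScalarTower R M M] [SMulCommClass R M M]
    (P : Matrix α ι R) (Q : Matrix ι β R) (S : α → M) (T : β → M) :
    ∑ i, (∑ a, P a i • S a) * (∑ b, Q i b • T b) = ∑ a, ∑ b, (P * Q) a b • (S a * T b) := by
  simp only [Finset.sum_mul_sum, smul_mul_smul_comm, mul_apply, Finset.sum_smul]
  rw [Finset.sum_comm]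
  exact Finset.sum_congr rfl fun a _ => Finset.sum_comm

end Contraction

lemma transpose_mul_congruence_inv_mul {n R : Type*} [Fintype n] [DecidableEq n] [CommRing R]
    (y h : Matrix n n R) (hy : IsUnit y.det) : yᵀ * (y * h * yᵀ)⁻¹ * y = h⁻¹ := by
  have hyT : IsUnit yᵀ.det := by rwa [det_transpose]
  calc yᵀ * (y * h * yᵀ)⁻¹ * y = (yᵀ * yᵀ⁻¹) * h⁻¹ * (y⁻¹ * y) := by
        rw [Matrix.mul_inv_rev, Matrix.mul_inv_rev]
        simp only [Matrix.mul_assoc]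
    _ = h⁻¹ := by
        rw [mul_nonsing_inv _ hyT, nonsing_inv_mul _ hy, Matrix.one_mul, Matrix.mul_one]

lemma inv_of_ηm : (of ηm)⁻¹ = of ηm := by
  refine inv_eq_left_inv ?_
  ext a b
  fin_cases a <;> fin_cases b <;> simp [mul_apply, ηm]

lemma sum_pauli_mul_mul_pauli (X : Matrix (Fin 2) (Fin 2) ℂ) :
    ∑ i : Fin 3, σm i.succ * X * σm i.succ = (2 * X.trace) • 1 - X := by
  have I_mul_mul_I (z : ℂ) : Complex.I * z * Complex.I = -z := by
    linear_combination z * Complex.I_mul_I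
  rw [eta_fin_two X]
  ext i j
  fin_cases i <;> fin_cases j <;>
    simp [σm, Fin.sum_univ_three, trace_fin_two, I_mul_mul_I] <;> ring

section Tetrad

variable (y : Matrix (Fin 4) (Fin 4) ℝ)

lemma gUp_eq_mul_mul_transpose : gUp y = y * of ηm * yᵀ := by
  ext μ ν
  simp only [gUp, mul_apply, of_apply, transpose_apply, Finset.sum_mul]
  rw [Finset.sum_comm]
  exact Finset.sum_congr rfl fun b _ => Finset.sum_congr rfl fun a _ => mul_right_comm _ _ _

lemma Lm_eq_sum_pauli (μ : Fin 4) : Lm y μ = ∑ i : Fin 3, y μ i.succ • σm i.succ := by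
  have hσ : y μ 0 • σm 0 = (y μ 0 : ℂ) • 1 := (Complex.coe_smul _ _).symm
  rw [Lm, K, Fin.sum_univ_succ, hσ, add_sub_cancel_left]

variable {y}

lemma transpose_mul_gDown_mul (hy : IsUnit y.det) : yᵀ * gDown y * y = of ηm := by
  rw [gDown, gUp_eq_mul_mul_transpose, transpose_mul_congruence_inv_mul y _ hy, inv_of_ηm]

lemma spatial_transpose_mul_gDown_mul (hy : IsUnit y.det) :
    (y.submatrix id Fin.succ)ᵀ * (gDown y * y.submatrix id Fin.succ)
      = (-1 : Matrix (Fin 3) (Fin 3) ℝ) := by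
  have hη : (of ηm).submatrix Fin.succ Fin.succ = (-1 : Matrix (Fin 3) (Fin 3) ℝ) := by
    ext i j
    simp [ηm, one_apply, apply_ite]
  rw [← hη, ← transpose_mul_gDown_mul hy, Matrix.mul_assoc]
  rfl

lemma sum_Lm_mul_mul_Ld (hy : IsUnit y.det) (X : Matrix (Fin 2) (Fin 2) ℂ) :
    ∑ ν, Lm y ν * X * Ld y ν = X - (2 * X.trace) • 1 := by
  set s : Matrix (Fin 4) (Fin 3) ℝ := y.submatrix id Fin.succ
  have hL (ν) : Lm y ν * X = ∑ i, sᵀ i ν • (σm i.succ * X) := by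
    simp only [Lm_eq_sum_pauli, Finset.sum_mul, smul_mul_assoc]
    rfl
  have hLd (ν) : Ld y ν = ∑ j, (gDown y * s) ν j • σm j.succ := by
    simp only [Ld, Lm_eq_sum_pauli]
    exact sum_smul_sum_smul (gDown y) s (fun j => σm j.succ) ν
  calc ∑ ν, Lm y ν * X * Ld y ν
      = ∑ i, ∑ j, (sᵀ * (gDown y * s)) i j • (σm i.succ * X * σm j.succ) := by
        simp only [hL, hLd, sum_sum_smul_mul_sum_smul]
    _ = -∑ i : Fin 3, σm i.succ * X * σm i.succ := by
        rw [spatial_transpose_mul_gDown_mul hy]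
        simp [one_apply, ite_smul]
    _ = X - (2 * X.trace) • 1 := by rw [sum_pauli_mul_mul_pauli, neg_sub]

lemma sum_lie_Lm_mul_Ld (hy : IsUnit y.det) (C : Matrix (Fin 2) (Fin 2) ℂ) :
    ∑ ν, ⁅C, Lm y ν⁆ * Ld y ν = (-4 : ℂ) • (C - (C.trace / 2) • 1) := by
  have hLL : ∑ ν, Lm y ν * Ld y ν = (-3 : ℂ) • 1 := by
    have h := sum_Lm_mul_mul_Ld hy 1
    simp only [Matrix.mul_one, trace_one, Fintype.card_fin] at h
    rw [h]
    module
  calc ∑ ν, ⁅C, Lm y ν⁆ * Ld y ν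
      = C * ∑ ν, Lm y ν * Ld y ν - ∑ ν, Lm y ν * C * Ld y ν := by
        simp only [Ring.lie_def, sub_mul, Finset.sum_sub_distrib, Finset.mul_sum, mul_assoc]
    _ = (-4 : ℂ) • (C - (C.trace / 2) • 1) := by
        rw [hLL, sum_Lm_mul_mul_Ld hy, mul_smul_comm, mul_one]
        module

end Tetrad

lemma sum_smul_Lm_mul_Ld (y : Matrix (Fin 4) (Fin 4) ℝ) (κ : Fin 4 → Fin 4 → ℂ) :
    ∑ ν, (∑ μ, κ μ ν • Lm y μ) * Ld y ν
      = ∑ μ, ∑ ν, (∑ l, κ μ l * gDown y l ν) • (Lm y μ * Lm y ν) := by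
  have hLd (ν) : Ld y ν = ∑ l, (gDown y ν l : ℂ) • Lm y l := by
    simp only [Ld, Complex.coe_smul]
  simp only [hLd]
  exact sum_sum_smul_mul_sum_smul (of κ) ((gDown y).map Complex.ofReal) (Lm y) (Lm y)

theorem C_from_primitive_equation_general (y : Matrix (Fin 4) (Fin 4) ℝ) (hy : IsUnit y.det)
    (C : Matrix (Fin 2) (Fin 2) ℂ) (D : Fin 4 → Matrix (Fin 2) (Fin 2) ℂ)
    (κ : Fin 4 → Fin 4 → ℂ) (heq : ∀ ν, D ν - ⁅C, Lm y ν⁆ = ∑ μ, κ μ ν • Lm y μ) :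
    C - (C.trace / 2) • 1 = -((1 / 4 : ℂ) • ((∑ ν, D ν * Ld y ν)
      - ∑ μ, ∑ ν, (∑ l, κ μ l * gDown y l ν) • (Lm y μ * Lm y ν))) := by
  have hcontract : (∑ ν, D ν * Ld y ν)
      - ∑ μ, ∑ ν, (∑ l, κ μ l * gDown y l ν) • (Lm y μ * Lm y ν)
        = ∑ ν, ⁅C, Lm y ν⁆ * Ld y ν := by
    rw [← sum_smul_Lm_mul_Ld, ← Finset.sum_sub_distrib]
    simp only [← heq, ← sub_mul, sub_sub_cancel]
  rw [hcontract, sum_lie_Lm_mul_Ld hy]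
  module

/-- Pointwise form of Theorem 2: if `C` is anti-hermitian and traceless, the
lowered array `κ_{μν} := Σ_λ κ_μ{}^λ g_{λν}` is antisymmetric, and
`D^ν − [C, L^ν] = Σ_μ κ_μ{}^ν L^μ` for all `ν`, then
`C = −(1/4)(Σ_ν D^ν L_ν − Σ_{μ,ν} κ_{μν} L^μ L^ν)`. -/
theorem C_from_primitive_equation (y : Matrix (Fin 4) (Fin 4) ℝ) (hy : IsUnit y.det)
    (C : Matrix (Fin 2) (Fin 2) ℂ) (hCah : Cᴴ = -C) (hCtr : C.trace = 0)
    (D : Fin 4 → Matrix (Fin 2) (Fin 2) ℂ) (κ : Fin 4 → Fin 4 → ℝ)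
    (hκ : ∀ μ ν : Fin 4, (∑ l, κ μ l * gDown y l ν) = -(∑ l, κ ν l * gDown y l μ))
    (heq : ∀ ν : Fin 4, D ν - (C * Lm y ν - Lm y ν * C) = ∑ μ, (κ μ ν : ℝ) • Lm y μ) :
    C = -((1 / 4 : ℂ) • ((∑ ν, D ν * Ld y ν)
          - ∑ μ, ∑ ν, ((∑ l, κ μ l * gDown y l ν : ℝ) : ℂ) • (Lm y μ * Lm y ν))) := by
  simpa [hCtr] using C_from_primitive_equation_general y hy C D (fun μ ν => κ μ ν)
    (by simpa [Ring.lie_def] using heq)
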